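/- Let T be a tree with n ≥ 2 nodes and positive integer weights w, let 0 < ε, let W = max_{u∈T} w(u), K = ε·W/n², and define scaled weights w'(u) = ⌈w(u)/K⌉ for every node u. If D is an optimal search tree for (T, w') and D* is an optimal search tree for (T, w), then cost(D, w) ≤ (1 + ε)·cost(D*, w), i.e., an optimal search tree for the scaled instance is a (1+ε)-approximate search tree for the original instance. -/

import Mathlib

/-!
Writing `K = ε W / n²`, the scaled weights satisfy `w u ≤ K * w' u ≤ w u + K`. Hence for every
search tree `C` for `T`, optimality of `D` for `w'` gives
`cost w D ≤ K * cost w' D ≤ K * cost w' C ≤ cost w C + K * (sum of leaf depths of C)`.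

The encoding allows nodes with a single child, so the leaf depths of an arbitrary search tree are
unbounded. `BT.exists_compressed` contracts such nodes: it turns `Dstar` into a search tree `C` with
the same leaves, no larger cost, and total leaf depth at most `n²`. The error term is then at most
`K * n² = ε W`, and `W ≤ cost w C` because with at least two leaves every leaf has depth at
least one (`BT.leafWeight_le_cost`).
-/

open scoped Classical

/-- Ordered binary trees, every node carrying a label (assignment). `nil` is the empty tree. -/
inductive BT (α : Type) where
  | nil : BT α
  | node (a : α) (l r : BT α) : BT α
  deriving DecidableEq

namespace BT

variable {α : Type}

/-- Labels of the leaves (nodes with no children), from left to right. -/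
def leafList : BT α → List α
  | .nil => []
  | .node a .nil .nil => [a]
  | .node _ l r => l.leafList ++ r.leafList

/-- Labels of all nodes. -/
def vals : BT α → List α
  | .nil => []
  | .node a l r => a :: (l.vals ++ r.vals)

/-- Leaf labels together with the depth (number of edges from the root) of the leaf. -/
def leafDepths : BT α → List (α × ℕ)
  | .nil => []
  | .node a .nil .nil => [(a, 0)]
  | .node _ l r => (l.leafDepths ++ r.leafDepths).map (fun p => (p.1, p.2 + 1))

/-- Height of a binary tree, in edges. -/
def height : BT α → ℕ
  | .nil => 0
  | .node _ .nil .nil => 0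
  | .node _ l r => max l.height r.height + 1

/-- Label of the root. -/
def rootVal : BT α → Option α
  | .nil => none
  | .node a _ _ => some a

/-- The labels of the nodes on the path from the root to the (leftmost) leaf labelled `x`. -/
def pathTo [DecidableEq α] : BT α → α → List α
  | .nil, _ => []
  | .node a l r, x => a :: (if x ∈ r.leafList then r.pathTo x else l.pathTo x)

/-- The depth (number of edges) of the leaf labelled `x`. -/
def depthOf [DecidableEq α] (D : BT α) (x : α) : ℕ := (D.pathTo x).length - 1

/-- The search-tree property w.r.t. a descendance relation `desc` (`desc u v` meaning
`v` lies in the subtree of the input tree rooted at `u`): everything in the right subtree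
of a node labelled `a` is in the subtree of `a`, everything in the left subtree is not. -/
def SearchProp (desc : α → α → Prop) : BT α → Prop
  | .nil => True
  | .node a l r =>
      (∀ b ∈ r.vals, desc a b) ∧ (∀ b ∈ l.vals, ¬ desc a b) ∧
        SearchProp desc l ∧ SearchProp desc r

/-- Cost (expected number of queries, unnormalized) of a search tree. -/
def cost (w : α → ℕ) (D : BT α) : ℕ := (D.leafDepths.map (fun p => p.2 * w p.1)).sum

/-- Total weight of the leaves of a search (sub)tree. -/
def leafWeight (w : α → ℕ) (D : BT α) : ℕ := (D.leafList.map w).sum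

/-- All subtrees of a binary tree together with their depth. -/
def subtreesD : BT α → List (BT α × ℕ)
  | .nil => []
  | .node a l r =>
      (BT.node a l r, 0) :: (l.subtreesD ++ r.subtreesD).map (fun p => (p.1, p.2 + 1))

end BT

/-- A finite rooted tree, encoded by a parent function on `Fin n`. -/
structure RTree where
  n : ℕ
  parent : Fin n → Fin n
  root : Fin n
  parent_root : parent root = root
  reach : ∀ v, ∃ k, parent^[k] v = root

namespace RTree

variable (T : RTree)

/-- `T.anc u v` holds iff `u` is a (weak) ancestor of `v`, i.e. `v ∈ T_u`. -/
def anc (u v : Fin T.n) : Prop := ∃ k, T.parent^[k] v = u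

/-- The set of nodes of the subtree `T_u` rooted at `u`. -/
noncomputable def subtree (u : Fin T.n) : Finset (Fin T.n) :=
  Finset.univ.filter (fun v => T.anc u v)

/-- Total weight of a set of nodes. -/
def wsum (w : Fin T.n → ℕ) (S : Finset (Fin T.n)) : ℕ := ∑ v ∈ S, w v

/-- `D` is a search tree for the entire tree `T`. -/
def IsSearchTree (D : BT (Fin T.n)) : Prop :=
  (∀ v : Fin T.n, D.leafList.count v = 1) ∧ BT.SearchProp T.anc D

/-- `D` is a search tree for the subtree (or subforest) of `T` induced by the node set `V'`. -/
def IsSearchTreeOn (V' : Finset (Fin T.n)) (D : BT (Fin T.n)) : Prop :=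
  (∀ v : Fin T.n, D.leafList.count v = (if v ∈ V' then 1 else 0)) ∧
    (∀ a ∈ D.vals, a ∈ V') ∧ BT.SearchProp T.anc D

/-- `D` is an optimal (minimum expected cost) search tree for `(T,w)`. -/
def IsOptimal (w : Fin T.n → ℕ) (D : BT (Fin T.n)) : Prop :=
  T.IsSearchTree D ∧ ∀ D' : BT (Fin T.n), T.IsSearchTree D' → BT.cost w D ≤ BT.cost w D'

/-- Degree of a node of `T` (number of neighbours). -/
noncomputable def degree (v : Fin T.n) : ℕ :=
  (Finset.univ.filter (fun u => T.parent u = v ∧ u ≠ v)).card + (if v = T.root then 0 else 1)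

/-- Maximum degree `Δ(T)`. -/
noncomputable def maxDegree : ℕ := Finset.univ.sup T.degree

/-- `y` lies on the (unique) path between `u` and `v` in `T`. -/
def onPath (y u v : Fin T.n) : Prop :=
  (T.anc y u ∨ T.anc y v) ∧ (∀ z, T.anc z u → T.anc z v → T.anc z y)

end RTree

/-! ### Costs and leaf counts of binary trees -/

namespace BT

variable {α : Type}

theorem leafList_node (a : α) (l r : BT α) (h : l ≠ nil ∨ r ≠ nil) :
    (node a l r).leafList = l.leafList ++ r.leafList := by
  cases l <;> cases r <;> simp_all [leafList]

theorem leafDepths_node (a : α) (l r : BT α) (h : l ≠ nil ∨ r ≠ nil) :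
    (node a l r).leafDepths
      = (l.leafDepths ++ r.leafDepths).map (fun p => (p.1, p.2 + 1)) := by
  cases l <;> cases r <;> simp_all [leafDepths]

theorem map_fst_leafDepths (D : BT α) : D.leafDepths.map Prod.fst = D.leafList := by
  induction D with
  | nil => rfl
  | node a l r ihl ihr =>
    by_cases h : l ≠ nil ∨ r ≠ nil
    · rw [leafList_node a l r h, leafDepths_node a l r h, ← ihl, ← ihr]
      simp [Function.comp_def]
    · push Not at h
      obtain ⟨rfl, rfl⟩ := h
      rfl

theorem cost_leaf (w : α → ℕ) (a : α) : cost w (node a nil nil) = 0 := by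
  simp [cost, leafDepths]

/-- Hanging two subtrees below a common root lowers all their leaves by one level. -/
theorem cost_node (w : α → ℕ) (a : α) (l r : BT α) (h : l ≠ nil ∨ r ≠ nil) :
    cost w (node a l r) = cost w l + cost w r + leafWeight w l + leafWeight w r := by
  have key : ∀ L : List (α × ℕ),
      (L.map ((fun p : α × ℕ => p.2 * w p.1) ∘ fun p => (p.1, p.2 + 1))).sum
        = (L.map (fun p => p.2 * w p.1)).sum + ((L.map Prod.fst).map w).sum := by
    intro L
    induction L with
    | nil => rfl
    | cons p L ih =>
      simp only [List.map_cons, List.sum_cons, ih, Function.comp_apply]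
      ring
  simp only [cost, leafWeight]
  rw [leafDepths_node a l r h, List.map_map, key, List.map_append, List.map_append,
    map_fst_leafDepths, map_fst_leafDepths]
  simp only [List.sum_append, List.map_append]
  ring

theorem leafList_length_pos {D : BT α} (h : D ≠ nil) : 1 ≤ D.leafList.length := by
  induction D with
  | nil => exact absurd rfl h
  | node a l r ihl ihr =>
    by_cases hl : l = nil
    · by_cases hr : r = nil
      · subst hl hr
        simp [leafList]
      · rw [leafList_node a l r (Or.inr hr), List.length_append]
        have := ihr hr
        omega
    · rw [leafList_node a l r (Or.inl hl), List.length_append]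
      have := ihl hl
      omega

theorem leafWeight_one (D : BT α) : leafWeight (fun _ => 1) D = D.leafList.length := by
  simp [leafWeight]

/-- If there are at least two leaves, each of them has depth at least one. -/
theorem leafWeight_le_cost (w : α → ℕ) (D : BT α) (h : 2 ≤ D.leafList.length) :
    leafWeight w D ≤ cost w D := by
  cases D with
  | nil => simp [leafList] at h
  | node a l r =>
    by_cases hlr : l ≠ nil ∨ r ≠ nil
    · rw [cost_node w a l r hlr, leafWeight, leafList_node a l r hlr]
      simp only [List.map_append, List.sum_append, leafWeight]
      omega
    · push Not at hlr
      obtain ⟨rfl, rfl⟩ := hlr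
      simp [leafList] at h

/-! ### Contraction of nodes with a single child -/

/-- Contracting the nodes with exactly one child keeps the leaves and the search-tree property,
does not increase any cost, and makes the sum of the leaf depths (the cost for unit weights) at most
quadratic in the number of leaves. -/
theorem exists_compressed (desc : α → α → Prop) (D : BT α) (hD : SearchProp desc D) :
    ∃ C : BT α, SearchProp desc C ∧ C.leafList = D.leafList ∧ C.vals ⊆ D.vals ∧
      (∀ w, cost w C ≤ cost w D) ∧ cost (fun _ => 1) C ≤ D.leafList.length ^ 2 := by
  induction D with
  | nil => exact ⟨nil, trivial, rfl, fun _ h => h, fun _ => le_rfl, by simp [cost, leafDepths]⟩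
  | node a l r ihl ihr =>
    obtain ⟨hr, hl, hsl, hsr⟩ := hD
    by_cases h : l ≠ nil ∨ r ≠ nil
    · obtain ⟨L, hL, hLl, hLv, hLc, hLb⟩ := ihl hsl
      obtain ⟨R, hR, hRl, hRv, hRc, hRb⟩ := ihr hsr
      by_cases hl0 : l = nil
      · refine ⟨R, hR, ?_, ?_, fun w => ?_, ?_⟩
        · rw [leafList_node a l r h, hRl, hl0]; rfl
        · intro x hx
          simp [vals, hRv hx]
        · rw [cost_node w a l r h]
          have := hRc w
          omega
        · rw [leafList_node a l r h, hl0]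
          simpa [leafList] using hRb
      by_cases hr0 : r = nil
      · refine ⟨L, hL, ?_, ?_, fun w => ?_, ?_⟩
        · rw [leafList_node a l r h, hLl, hr0]; simp [leafList]
        · intro x hx
          simp [vals, hLv hx]
        · rw [cost_node w a l r h]
          have := hLc w
          omega
        · rw [leafList_node a l r h, hr0]
          simpa [leafList] using hLb
      have hl1 := leafList_length_pos hl0
      have hr1 := leafList_length_pos hr0
      have hLR : L ≠ nil ∨ R ≠ nil := by
        left
        rintro rfl
        rw [← hLl] at hl1
        simp [leafList] at hl1
      refine ⟨node a L R, ⟨fun b hb => hr b (hRv hb), fun b hb => hl b (hLv hb), hL, hR⟩,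
        ?_, ?_, fun w => ?_, ?_⟩
      · rw [leafList_node a l r h, leafList_node a L R hLR, hLl, hRl]
      · intro x hx
        simp only [vals, List.mem_cons, List.mem_append] at hx ⊢
        rcases hx with hx | hx | hx
        · exact Or.inl hx
        · exact Or.inr (Or.inl (hLv hx))
        · exact Or.inr (Or.inr (hRv hx))
      · rw [cost_node w a l r h, cost_node w a L R hLR]
        simp only [leafWeight, hLl, hRl]
        have := hLc w
        have := hRc w
        omega
      · rw [cost_node _ a L R hLR, leafWeight_one, leafWeight_one, leafList_node a l r h,
          List.length_append, hLl, hRl]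
        -- Both subtrees are nonempty, so `x + y ≤ 2 * x * y` for their leaf counts `x`, `y`.
        nlinarith
    · push Not at h
      obtain ⟨rfl, rfl⟩ := h
      exact ⟨node a nil nil, ⟨hr, hl, hsl, hsr⟩, rfl, fun _ h => h, fun _ => le_rfl,
        by rw [cost_leaf]; exact Nat.zero_le _⟩

/-! ### Effect of rounding the weights on the cost -/

theorem cost_le_mul (w w' : α → ℕ) (K : ℝ) (h : ∀ u, (w u : ℝ) ≤ K * w' u) (D : BT α) :
    (cost w D : ℝ) ≤ K * cost w' D := by
  unfold cost
  induction D.leafDepths with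
  | nil => simp
  | cons p L ih =>
    simp only [List.map_cons, List.sum_cons, Nat.cast_add, Nat.cast_mul]
    have := mul_le_mul_of_nonneg_left (h p.1) (Nat.cast_nonneg (α := ℝ) p.2)
    linarith

/-- Rounding up adds at most `K` per node, hence `K` times the sum of the leaf depths
to the cost. -/
theorem mul_cost_le (w w' : α → ℕ) (K : ℝ) (h : ∀ u, K * w' u ≤ (w u : ℝ) + K) (D : BT α) :
    K * cost w' D ≤ (cost w D : ℝ) + K * cost (fun _ => 1) D := by
  unfold cost
  induction D.leafDepths with
  | nil => simp
  | cons p L ih =>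
    simp only [List.map_cons, List.sum_cons, Nat.cast_add, Nat.cast_mul, Nat.cast_one]
    have := mul_le_mul_of_nonneg_left (h p.1) (Nat.cast_nonneg (α := ℝ) p.2)
    linarith

end BT

/-! ### The approximation guarantee -/

/-- Let `T` be a tree with `n ≥ 2` nodes and positive integer weights `w`, let `ε > 0`,
`W = max_u w(u)`, `K = ε·W/n²`, and let `w'(u) = ⌈w(u)/K⌉`.  If `D` is an optimal search
tree for `(T,w')` and `D*` an optimal search tree for `(T,w)`, then
`cost(D,w) ≤ (1+ε)·cost(D*,w)`. -/
theorem statement6 (T : RTree) (w : Fin T.n → ℕ) (hw : ∀ v, 0 < w v) (hn : 2 ≤ T.n)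
    (ε : ℝ) (hε : 0 < ε)
    (w' : Fin T.n → ℕ)
    (hw' : ∀ u, w' u =
      ⌈(w u : ℝ) / (ε * ((Finset.univ.sup w : ℕ) : ℝ) / ((T.n : ℝ) ^ 2))⌉₊)
    (D : BT (Fin T.n)) (hD : T.IsOptimal w' D)
    (Dstar : BT (Fin T.n)) (hDstar : T.IsOptimal w Dstar) :
    (BT.cost w D : ℝ) ≤ (1 + ε) * (BT.cost w Dstar : ℝ) := by
  have hn0 : (0 : ℝ) < T.n := by exact_mod_cast (by omega : 0 < T.n)
  have hW : 0 < Finset.univ.sup w := lt_of_lt_of_le (hw T.root) (Finset.le_sup (Finset.mem_univ _))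
  have hW0 : (0 : ℝ) < ((Finset.univ.sup w : ℕ) : ℝ) := by exact_mod_cast hW
  set W := Finset.univ.sup w with hWdef
  obtain ⟨K, hK⟩ : ∃ K : ℝ, K = ε * (W : ℝ) / ((T.n : ℝ) ^ 2) := ⟨_, rfl⟩
  have hK0 : 0 < K := by rw [hK]; positivity
  have hKn : K * (T.n : ℝ) ^ 2 = ε * W := by rw [hK]; field_simp
  rw [← hK] at hw'
  have hlow : ∀ u, (w u : ℝ) ≤ K * w' u := by
    intro u
    rw [hw' u, mul_comm, ← div_le_iff₀ hK0]
    exact Nat.le_ceil _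
  have hup : ∀ u, K * w' u ≤ (w u : ℝ) + K := by
    intro u
    rw [hw' u]
    have h1 := (Nat.ceil_lt_add_one (a := (w u : ℝ) / K) (by positivity)).le
    calc K * (⌈(w u : ℝ) / K⌉₊ : ℝ) ≤ K * ((w u : ℝ) / K + 1) :=
          mul_le_mul_of_nonneg_left h1 hK0.le
      _ = (w u : ℝ) + K := by field_simp
  obtain ⟨C, hCs, hCl, -, hCc, hCb⟩ := BT.exists_compressed T.anc Dstar hDstar.1.2
  have hcount : ∀ v, Dstar.leafList.count v = 1 := hDstar.1.1
  have hmem : ∀ v, v ∈ Dstar.leafList := fun v =>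
    List.count_pos_iff.1 (by rw [hcount v]; exact one_pos)
  have hlen : Dstar.leafList.length = T.n := by
    have hnd : Dstar.leafList.Nodup := List.nodup_iff_count_le_one.2 fun v => (hcount v).le
    rw [← List.toFinset_card_of_nodup hnd,
      Finset.eq_univ_iff_forall.2 fun v => List.mem_toFinset.2 (hmem v), Finset.card_univ,
      Fintype.card_fin]
  have hCT : T.IsSearchTree C := ⟨fun v => by rw [hCl]; exact hcount v, hCs⟩
  have hWC : W ≤ BT.cost w C := by
    refine le_trans ?_ (BT.leafWeight_le_cost w C (by rw [hCl, hlen]; exact hn))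
    refine Finset.sup_le fun v _ => ?_
    rw [BT.leafWeight, hCl]
    exact List.le_sum_of_mem (List.mem_map_of_mem (hmem v))
  have h1 := BT.cost_le_mul w w' K hlow D
  have h2 : (BT.cost w' D : ℝ) ≤ BT.cost w' C := by exact_mod_cast hD.2 C hCT
  have h3 := BT.mul_cost_le w w' K hup C
  have h4 : (BT.cost (fun _ => 1) C : ℝ) ≤ (T.n : ℝ) ^ 2 := by
    rw [hlen] at hCb
    exact_mod_cast hCb
  have h5 : (BT.cost w C : ℝ) ≤ BT.cost w Dstar := by exact_mod_cast hCc w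
  have h6 : (W : ℝ) ≤ BT.cost w C := by exact_mod_cast hWC
  calc (BT.cost w D : ℝ) ≤ K * BT.cost w' D := h1
    _ ≤ K * BT.cost w' C := mul_le_mul_of_nonneg_left h2 hK0.le
    _ ≤ BT.cost w C + K * BT.cost (fun _ => 1) C := h3
    _ ≤ BT.cost w C + K * (T.n : ℝ) ^ 2 := by gcongr
    _ = BT.cost w C + ε * W := by rw [hKn]
    _ ≤ BT.cost w C + ε * BT.cost w C := by gcongr
    _ = (1 + ε) * BT.cost w C := by ring
    _ ≤ (1 + ε) * BT.cost w Dstar := by gcongr
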